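/- Let R be a noetherian commutative local ring with residue field of characteristic p > 0 such that R is p-local, and let G be a finite group such that p^n annihilates H^i(G, M) for all i ≥ 1, all R-modules M, and some fixed n. Let I ⊂ R be an ideal with I² = 0 and set R'' = R/I. Then for every x ∈ H^j(G, R'') with j ≥ 1, the element x^{p^n} lies in the image of the natural map H^*(G, R) → H^*(G, R''). -/

import Mathlib

/-!
STATEMENT 14: Let R be a noetherian commutative local ring with residue field of characteristic
p > 0 such that R is p-local, and let G be a finite group such that p^n annihilates H^i(G,M)
for all i ≥ 1 and all R-modules M (trivial action).  Let I ⊂ R be an ideal with I² = 0 and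
R'' = R/I.  Then for every x ∈ H^j(G,R'') with j ≥ 1, the element x^{p^n} lies in the image of
the natural map H^*(G,R) → H^*(G,R'').

Group cohomology is rendered at the level of inhomogeneous cochains (with the standard
differential, specialised to trivial coefficients), cohomology classes being represented by
cocycles, and cup powers by their explicit formula for trivial coefficients.
-/

universe u

/-- The inhomogeneous differential on cochains of `G` with trivial coefficients in `M`. -/
def gdiff (G : Type*) [Group G] (M : Type*) [AddCommGroup M] (n : ℕ)
    (f : (Fin n → G) → M) : (Fin (n + 1) → G) → M :=
  fun g => f (fun i => g i.succ) +
    ∑ j : Fin (n + 1), ((-1 : ℤ) ^ ((j : ℕ) + 1)) • f (Fin.contractNth j (· * ·) g)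

/-- The `k`-fold cup power of a degree-`j` cochain with coefficients in a commutative ring
(trivial action), given by its explicit formula. -/
def cupPow (G : Type*) (S : Type*) [CommRing S] (j k : ℕ)
    (f : (Fin j → G) → S) : (Fin (k * j) → G) → S :=
  fun g => ∏ i : Fin k, f (fun t : Fin j =>
    g ⟨i.1 * j + t.1, by
      have hi : i.1 + 1 ≤ k := i.2
      calc i.1 * j + t.1 < i.1 * j + j := by omega
        _ = (i.1 + 1) * j := by ring
        _ ≤ k * j := Nat.mul_le_mul_right j hi⟩)

/-! ### Homogeneous cochains as functions of infinite sequences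

A homogeneous cochain of length `m` (degree `m - 1`) is a function of sequences `ℕ → G` that depends
on the first `m` terms only and is invariant under left translation. -/

namespace HomogeneousCochain

/-- Omit the `i`-th term of a sequence. -/
def omitAt {G : Type*} (i : ℕ) (w : ℕ → G) : ℕ → G := fun t => if t < i then w t else w (t + 1)

/-- Prepend a term to a sequence. -/
def prepend {G : Type*} (a : G) (w : ℕ → G) : ℕ → G := fun t => Nat.casesOn t a w

/-- Reverse the first `m` terms of a sequence. -/
def rev {G : Type*} (m : ℕ) (w : ℕ → G) : ℕ → G := fun t => if t < m then w (m - 1 - t) else w t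

variable {G : Type*} {R : Type*} [CommRing R]

variable (G R) in
/-- The homogeneous differential from length `m` to length `m + 1`. -/
def d (m : ℕ) : ((ℕ → G) → R) →ₗ[R] ((ℕ → G) → R) :=
  ∑ i ∈ Finset.range (m + 1), (-1 : R) ^ i • LinearMap.funLeft R R (omitAt i)

variable (G R) in
/-- Reversal of the arguments of a cochain of length `m`, with the sign making it a chain map. -/
def reversal (m : ℕ) : ((ℕ → G) → R) →ₗ[R] ((ℕ → G) → R) :=
  (-1 : R) ^ m.choose 2 • LinearMap.funLeft R R (rev m)

variable (G R) in
/-- The homotopy from the identity to `reversal`, from length `m + 1` to length `m`. -/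
def homotopy : ℕ → ((ℕ → G) → R) →ₗ[R] ((ℕ → G) → R)
  | 0 => 0
  | m + 1 => LinearMap.pi fun w => LinearMap.proj w ∘ₗ
      (reversal G R (m + 1) - LinearMap.id - d G R m ∘ₗ homotopy m) ∘ₗ
        LinearMap.funLeft R R (prepend (w 0))

/-- The cup product whose left factor has degree `p`. -/
def cup (p : ℕ) (F K : (ℕ → G) → R) : (ℕ → G) → R := fun w => F w * K (fun i => w (i + p))

/-- The `k`-th cup power of a cochain of degree `j`. -/
def power (j : ℕ) (X : (ℕ → G) → R) : ℕ → (ℕ → G) → R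
  | 0 => 1
  | k + 1 => cup j X (power j X k)

lemma d_apply (m : ℕ) (F : (ℕ → G) → R) (w : ℕ → G) :
    d G R m F w = ∑ i ∈ Finset.range (m + 1), (-1 : R) ^ i * F (omitAt i w) := by
  simp [d, LinearMap.funLeft_apply]

lemma reversal_apply (m : ℕ) (F : (ℕ → G) → R) (w : ℕ → G) :
    reversal G R m F w = (-1 : R) ^ m.choose 2 * F (rev m w) := by
  simp [reversal, LinearMap.funLeft_apply]

lemma homotopy_succ_apply (m : ℕ) (F : (ℕ → G) → R) (w : ℕ → G) :
    homotopy G R (m + 1) F w = reversal G R (m + 1) (fun v => F (prepend (w 0) v)) w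
      - F (prepend (w 0) w) - d G R m (homotopy G R m (fun v => F (prepend (w 0) v))) w := rfl

lemma omitAt_zero_prepend (a : G) (w : ℕ → G) : omitAt 0 (prepend a w) = w := by
  ext t; simp [omitAt, prepend]

lemma omitAt_succ_prepend (i : ℕ) (a : G) (w : ℕ → G) :
    omitAt (i + 1) (prepend a w) = prepend a (omitAt i w) := by
  ext t; cases t <;> simp [omitAt, prepend]

lemma prepend_zero_tail (w : ℕ → G) : prepend (w 0) (fun t => w (t + 1)) = w := by
  ext t; cases t <;> rfl

lemma d_succ_prepend (m : ℕ) (F : (ℕ → G) → R) (a : G) (w : ℕ → G) :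
    d G R (m + 1) F (prepend a w) = F w - d G R m (fun v => F (prepend a v)) w := by
  simp only [d_apply]
  rw [Finset.sum_range_succ']
  simp only [omitAt_zero_prepend, omitAt_succ_prepend, pow_succ]
  simp [Finset.sum_neg_distrib, neg_add_eq_sub]

lemma d_d (m : ℕ) (F : (ℕ → G) → R) : d G R (m + 1) (d G R m F) = 0 := by
  induction m generalizing F with
  | zero =>
    ext w
    simp only [d_apply, Finset.sum_range_succ, Finset.sum_range_zero, Pi.zero_apply]
    have h : omitAt 0 (omitAt 1 w) = omitAt 0 (omitAt 0 w) := by ext t; simp [omitAt]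
    simp [h]
  | succ m ih =>
    ext w
    rw [← prepend_zero_tail w, d_succ_prepend]
    have h : (fun v => d G R (m + 1) F (prepend (w 0) v))
        = F - d G R m (fun v => F (prepend (w 0) v)) := by
      ext v; rw [d_succ_prepend]; rfl
    rw [h, map_sub, ih]
    simp

lemma rev_omitAt (m i : ℕ) (hi : i ≤ m) (w : ℕ → G) :
    rev m (omitAt i w) = omitAt (m - i) (rev (m + 1) w) := by
  ext t
  simp only [rev, omitAt]
  split_ifs <;> first | omega | rfl | (congr 1; omega)

lemma reversal_d (m : ℕ) (F : (ℕ → G) → R) :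
    reversal G R (m + 1) (d G R m F) = d G R m (reversal G R m F) := by
  ext w
  simp only [reversal_apply, d_apply]
  rw [← Finset.sum_range_reflect, Finset.mul_sum]
  refine Finset.sum_congr rfl fun i hi => ?_
  have hi' : i ≤ m := by simpa [Nat.lt_succ_iff] using hi
  rw [rev_omitAt m i hi']
  have e : m + 1 - 1 - i = m - i := by omega
  rw [e, Nat.choose_succ_succ' m 1, Nat.choose_one_right, ← mul_assoc, ← mul_assoc, ← pow_add,
    ← pow_add]
  congr 1
  obtain ⟨s, rfl⟩ := Nat.exists_eq_add_of_le hi'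
  have e' : i + s + (i + s).choose (1 + 1) + (i + s - i)
      = i + (i + s).choose 2 + 2 * s := by
    rw [Nat.add_sub_cancel_left]; ring
  rw [e', pow_add, pow_mul]
  simp

lemma homotopy_zero_apply (F : (ℕ → G) → R) : homotopy G R 0 F = 0 := rfl

lemma d_homotopy_add (m : ℕ) (F : (ℕ → G) → R) :
    homotopy G R (m + 1) (d G R (m + 1) F) + d G R m (homotopy G R m F)
      = reversal G R (m + 1) F - F := by
  have split (m : ℕ) (F : (ℕ → G) → R) (a : G) : (fun v => d G R (m + 1) F (prepend a v))
      = F - d G R m (fun v => F (prepend a v)) := by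
    ext v; rw [d_succ_prepend]; rfl
  induction m generalizing F with
  | zero =>
    ext w
    rw [Pi.add_apply, homotopy_succ_apply, split, d_succ_prepend, map_sub, map_sub, map_sub,
      reversal_d]
    have h : reversal G R 0 (fun v => F (prepend (w 0) v)) = fun v => F (prepend (w 0) v) := by
      ext v
      have hv : rev 0 v = v := by ext t; simp [rev]
      simp [reversal_apply, hv]
    simp [homotopy_zero_apply, h]
  | succ m ih =>
    ext w
    rw [Pi.add_apply, homotopy_succ_apply, split, d_succ_prepend, map_sub, map_sub, map_sub,
      reversal_d]
    have h := congrArg (d G R (m + 1)) (ih (fun v => F (prepend (w 0) v)))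
    rw [map_add, d_d, add_zero, map_sub] at h
    rw [h]
    simp only [Pi.sub_apply]
    ring

variable {I J : Ideal R} {m p q : ℕ} {F K : (ℕ → G) → R}

lemma homotopy_apply_mem (h : ∀ w, F w ∈ I) (w : ℕ → G) : homotopy G R m F w ∈ I := by
  induction m generalizing F w with
  | zero => simp [homotopy_zero_apply]
  | succ m ih =>
    rw [homotopy_succ_apply, reversal_apply, d_apply]
    refine I.sub_mem (I.sub_mem (I.mul_mem_left _ (h _)) (h _)) ?_
    exact I.sum_mem fun i _ => I.mul_mem_left _ (ih (fun v => h _) _)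

lemma homotopy_local (h : ∀ v w, (∀ i < m + 1, v i = w i) → F v = F w) (v w : ℕ → G)
    (hvw : ∀ i < m, v i = w i) : homotopy G R m F v = homotopy G R m F w := by
  induction m generalizing F v w with
  | zero => rfl
  | succ m ih =>
    have hp (a : G) (v w : ℕ → G) (hvw : ∀ i < m + 1, v i = w i) :
        F (prepend a v) = F (prepend a w) := by
      refine h _ _ fun i hi => ?_
      cases i with
      | zero => rfl
      | succ i => exact hvw i (by omega)
    simp only [homotopy_succ_apply, reversal_apply, d_apply, hvw 0 (Nat.succ_pos m)]
    congr 1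
    · congr 1
      · congr 1
        refine hp _ _ _ fun t ht => ?_
        simp only [rev, if_pos ht]
        exact hvw _ (by omega)
      · exact hp _ _ _ hvw
    · refine Finset.sum_congr rfl fun i _ => ?_
      congr 1
      refine ih (hp _) _ _ fun t ht => ?_
      simp only [omitAt]
      split_ifs <;> exact hvw _ (by omega)

lemma cup_eq_zero (hI : I * I = ⊥) (hF : ∀ w, F w ∈ I) (hK : ∀ w, K w ∈ I) :
    cup p F K = 0 := by
  ext w
  have := Ideal.mul_mem_mul (hF w) (hK fun i => w (i + p))
  rw [hI] at this
  simpa [cup] using this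

lemma add_cup (F F' K : (ℕ → G) → R) : cup p (F + F') K = cup p F K + cup p F' K := by
  ext; simp [cup, add_mul]

lemma cup_add (F K K' : (ℕ → G) → R) : cup p F (K + K') = cup p F K + cup p F K' := by
  ext; simp [cup, mul_add]

lemma cup_sub (F K K' : (ℕ → G) → R) : cup p F (K - K') = cup p F K - cup p F K' := by
  ext; simp [cup, mul_sub]

lemma sub_cup (F F' K : (ℕ → G) → R) : cup p (F - F') K = cup p F K - cup p F' K := by
  ext; simp [cup, sub_mul]

lemma cup_smul (c : R) (F K : (ℕ → G) → R) : cup p F (c • K) = c • cup p F K := by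
  ext; simp [cup, mul_left_comm]

lemma cup_assoc (F K L : (ℕ → G) → R) : cup (p + q) (cup p F K) L = cup p F (cup q K L) := by
  ext w
  have h : (fun i => w (i + (p + q))) = fun i => w (i + q + p) := by
    ext i; congr 1; omega
  simp [cup, mul_assoc, h]

lemma d_one : d G R 1 1 = 0 := by
  ext w
  simp [d_apply, Finset.sum_range_succ]

lemma power_apply (j : ℕ) (X : (ℕ → G) → R) (k : ℕ) (w : ℕ → G) :
    power j X k w = ∏ i ∈ Finset.range k, X (fun t => w (t + i * j)) := by
  induction k generalizing w with
  | zero => rfl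
  | succ k ih =>
    rw [power, cup, ih, Finset.prod_range_succ', mul_comm]
    simp only [zero_mul, add_zero]
    congr 1
    refine Finset.prod_congr rfl fun i _ => ?_
    congr 1
    ext t
    congr 1
    ring

lemma map_cupPow {S T : Type*} [CommRing S] [CommRing T] (φ : S →+* T) (j k : ℕ)
    (f : (Fin j → G) → S) (g : Fin (k * j) → G) :
    φ (cupPow G S j k f g) = cupPow G T j k (fun h => φ (f h)) g := by
  simp [cupPow]

variable [Group G]

/-- The cochains of length `m` with values in the ideal `I`. -/
def cochains (G : Type*) [Group G] {R : Type*} [CommRing R] (I : Ideal R) (m : ℕ) :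
    Submodule R ((ℕ → G) → R) where
  carrier := {F | (∀ w, F w ∈ I) ∧ (∀ v w, (∀ i < m, v i = w i) → F v = F w) ∧
    ∀ g w, F (fun i => g * w i) = F w}
  add_mem' := by
    rintro F K ⟨h1, h2, h3⟩ ⟨k1, k2, k3⟩
    refine ⟨fun w => I.add_mem (h1 w) (k1 w), fun v w h => ?_, fun g w => ?_⟩
    · simp [h2 v w h, k2 v w h]
    · simp [h3 g w, k3 g w]
  zero_mem' := by simp
  smul_mem' := by
    rintro c F ⟨h1, h2, h3⟩
    refine ⟨fun w => I.mul_mem_left c (h1 w), fun v w h => ?_, fun g w => ?_⟩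
    · simp [h2 v w h]
    · simp [h3 g w]

/-- The coboundaries of length `m + 1` of cochains with values in the ideal `I`. -/
def coboundaries (G : Type*) [Group G] {R : Type*} [CommRing R] (I : Ideal R) (m : ℕ) :
    Submodule R ((ℕ → G) → R) := (cochains G I m).map (d G R m)

lemma d_mem_coboundaries (h : F ∈ cochains G I m) : d G R m F ∈ coboundaries G I m :=
  Submodule.mem_map_of_mem h

lemma cochains_mono (h : I ≤ J) : cochains G I m ≤ cochains G J m :=
  fun _ hF => ⟨fun w => h (hF.1 w), hF.2⟩

lemma d_mem (h : F ∈ cochains G I m) : d G R m F ∈ cochains G I (m + 1) := by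
  refine ⟨fun w => ?_, fun v w hvw => ?_, fun g w => ?_⟩
  · rw [d_apply]; exact I.sum_mem fun i _ => I.mul_mem_left _ (h.1 _)
  · simp only [d_apply]
    refine Finset.sum_congr rfl fun i _ => ?_
    rw [h.2.1 _ (omitAt i w)]
    intro t ht
    simp only [omitAt]
    split_ifs <;> exact hvw _ (by omega)
  · simp only [d_apply]
    refine Finset.sum_congr rfl fun i _ => ?_
    rw [← h.2.2 g (omitAt i w)]
    congr 2
    ext t
    simp only [omitAt]
    split_ifs <;> rfl

lemma reversal_mem (h : F ∈ cochains G I m) : reversal G R m F ∈ cochains G I m := by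
  refine ⟨fun w => ?_, fun v w hvw => ?_, fun g w => ?_⟩
  · rw [reversal_apply]; exact I.mul_mem_left _ (h.1 _)
  · simp only [reversal_apply]
    rw [h.2.1 _ (rev m w)]
    intro t ht
    simp only [rev, if_pos ht]
    exact hvw _ (by omega)
  · simp only [reversal_apply]
    rw [← h.2.2 g (rev m w)]
    congr 2
    ext t
    simp only [rev]
    split_ifs <;> rfl

lemma homotopy_translate (F : (ℕ → G) → R) (g : G) (w : ℕ → G) :
    homotopy G R m F (fun i => g * w i) = homotopy G R m (fun v => F (fun i => g * v i)) w := by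
  induction m generalizing F w with
  | zero => rfl
  | succ m ih =>
    have hp (a : G) (v : ℕ → G) :
        prepend (g * a) (fun i => g * v i) = fun i => g * prepend a v i := by
      ext t; cases t <;> rfl
    have hr (m : ℕ) (v : ℕ → G) : rev m (fun i => g * v i) = fun i => g * rev m v i := by
      ext t; simp only [rev]; split_ifs <;> rfl
    have ho (m : ℕ) (v : ℕ → G) : omitAt m (fun i => g * v i) = fun i => g * omitAt m v i := by
      ext t; simp only [omitAt]; split_ifs <;> rfl
    simp only [homotopy_succ_apply, reversal_apply, d_apply, hr, ho, hp, ih]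

lemma homotopy_mem (h : F ∈ cochains G I (m + 1)) : homotopy G R m F ∈ cochains G I m := by
  refine ⟨homotopy_apply_mem h.1, homotopy_local h.2.1, fun g w => ?_⟩
  rw [homotopy_translate]
  exact congrArg (fun K => homotopy G R m K w) (funext (h.2.2 g))

lemma cup_mem_mul (hF : F ∈ cochains G I (p + 1)) (hK : K ∈ cochains G J (q + 1)) :
    cup p F K ∈ cochains G (I * J) (p + q + 1) := by
  refine ⟨fun w => Ideal.mul_mem_mul (hF.1 _) (hK.1 _), fun v w h => ?_, fun g w => ?_⟩
  · simp only [cup]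
    rw [hF.2.1 v w fun i hi => h i (by omega), hK.2.1 _ _ fun i hi => h (i + p) (by omega)]
  · simp only [cup]
    rw [hF.2.2, hK.2.2 g (fun i => w (i + p))]

lemma cup_mem_left (hF : F ∈ cochains G I (p + 1)) (hK : K ∈ cochains G J (q + 1)) :
    cup p F K ∈ cochains G I (p + q + 1) :=
  cochains_mono Ideal.mul_le_left (cup_mem_mul hF hK)

lemma cup_mem_right (hF : F ∈ cochains G I (p + 1)) (hK : K ∈ cochains G J (q + 1)) :
    cup p F K ∈ cochains G J (p + q + 1) :=
  cochains_mono Ideal.mul_le_right (cup_mem_mul hF hK)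

lemma d_cup (hF : F ∈ cochains G I (p + 1)) (q : ℕ) (K : (ℕ → G) → R) :
    d G R (p + q + 1) (cup p F K)
      = cup (p + 1) (d G R (p + 1) F) K + (-1 : R) ^ p • cup p F (d G R (q + 1) K) := by
  ext w
  simp only [Pi.add_apply, Pi.smul_apply, smul_eq_mul, cup, d_apply]
  rw [show p + q + 1 + 1 = (p + 1) + (q + 1) by ring, Finset.sum_range_add,
    Finset.sum_range_succ _ (p + 1), Finset.sum_range_succ' _ (q + 1)]
  have h1 : ∀ i ∈ Finset.range (p + 1),
      (-1 : R) ^ i * (F (omitAt i w) * K (fun t => omitAt i w (t + p)))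
        = (-1 : R) ^ i * F (omitAt i w) * K (fun t => w (t + (p + 1))) := by
    intro i hi
    have hi := Finset.mem_range.1 hi
    rw [mul_assoc]
    congr 3
    ext t
    rw [omitAt, if_neg (by omega)]
    rfl
  have h2 : ∀ i, F (omitAt (p + 1 + i) w) = F w := fun i =>
    hF.2.1 _ _ fun t ht => by rw [omitAt, if_pos (by omega)]
  have h3 : ∀ i, (fun t => omitAt (p + 1 + i) w (t + p))
      = omitAt (i + 1) (fun t => w (t + p)) := by
    intro i
    ext t
    simp only [omitAt]
    split_ifs <;> first | omega | rfl | (congr 1; omega)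
  have h4 : omitAt 0 (fun t => w (t + p)) = fun t => w (t + (p + 1)) := by
    ext t
    simp only [omitAt, Nat.not_lt_zero, if_false]
    congr 1
    omega
  rw [Finset.sum_congr rfl h1, h4]
  simp only [h2, h3]
  have h5 := h2 0
  rw [add_zero] at h5
  rw [h5, ← Finset.sum_mul]
  have h6 : ∑ i ∈ Finset.range (q + 1),
        (-1 : R) ^ (p + 1 + i) * (F w * K (omitAt (i + 1) fun t => w (t + p)))
      = (-1 : R) ^ p * (F w * ∑ i ∈ Finset.range (q + 1),
        (-1 : R) ^ (i + 1) * K (omitAt (i + 1) fun t => w (t + p))) := by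
    simp only [Finset.mul_sum]
    exact Finset.sum_congr rfl fun i _ => by ring
  rw [h6]
  ring

lemma reversal_cup (hF : F ∈ cochains G I (p + 1)) (hK : K ∈ cochains G J (q + 1)) :
    reversal G R (p + q + 1) (cup p F K)
      = (-1 : R) ^ (p * q) • cup q (reversal G R (q + 1) K) (reversal G R (p + 1) F) := by
  ext w
  simp only [Pi.smul_apply, smul_eq_mul, cup, reversal_apply]
  have h1 : F (rev (p + q + 1) w) = F (rev (p + 1) fun i => w (i + q)) :=
    hF.2.1 _ _ fun t ht => by
      rw [rev, rev, if_pos (by omega), if_pos ht]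
      congr 1
      omega
  have h2 : K (fun i => rev (p + q + 1) w (i + p)) = K (rev (q + 1) w) :=
    hK.2.1 _ _ fun t ht => by
      rw [rev, rev, if_pos (by omega), if_pos ht]
      congr 1
      omega
  have h3 (q : ℕ) : (p + q + 1).choose 2 = p * q + (q + 1).choose 2 + (p + 1).choose 2 := by
    induction q with
    | zero => simp
    | succ q ih' =>
      have e (n : ℕ) : (n + 1).choose 2 = n + n.choose 2 := by
        rw [Nat.choose_succ_succ' n 1, Nat.choose_one_right]
      rw [e (p + (q + 1)), e (q + 1), ← add_assoc p q 1, ih']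
      ring
  rw [h1, h2, h3, pow_add, pow_add]
  ring

/-- Graded commutativity of the cup product of a cocycle modulo `I` with an `I`-valued cocycle. -/
lemma cup_comm (hI : I * I = ⊥) {X U : (ℕ → G) → R} (hX : X ∈ cochains G ⊤ (p + 1 + 1))
    (hdX : ∀ w, d G R (p + 1 + 1) X w ∈ I) (hU : U ∈ cochains G I (q + 1 + 1))
    (hdU : d G R (q + 1 + 1) U = 0) :
    cup (p + 1) X U - (-1 : R) ^ ((p + 1) * (q + 1)) • cup (q + 1) U X
      ∈ coboundaries G I (p + 1 + (q + 1)) := by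
  have hTX := d_homotopy_add (p + 1) X
  have hTU := d_homotopy_add (q + 1) U
  have hXU : cup (p + 1) X U ∈ cochains G I (p + 1 + (q + 1) + 1) := cup_mem_right hX hU
  have hTXU := d_homotopy_add (p + 1 + (q + 1)) (cup (p + 1) X U)
  rw [d_cup hX, hdU, cup_eq_zero hI hdX hU.1] at hTXU
  have hz : cup (p + 1) X (0 : (ℕ → G) → R) = 0 := by ext; simp [cup]
  rw [hz, smul_zero, add_zero, map_zero, zero_add, reversal_cup hX hU] at hTXU
  rw [hdU, map_zero, zero_add] at hTU
  set A := homotopy G R (p + 1) X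
  set B := homotopy G R (q + 1) U
  set V := homotopy G R (p + 1 + 1) (d G R (p + 1 + 1) X)
  have hAm : A ∈ cochains G ⊤ (p + 1) := homotopy_mem hX
  have hBm : B ∈ cochains G I (q + 1) := homotopy_mem hU
  have hVm : ∀ w, V w ∈ I := homotopy_apply_mem hdX
  have hTU' : reversal G R (q + 1 + 1) U = U + d G R (q + 1) B := by rw [hTU]; abel
  have hTX' : reversal G R (p + 1 + 1) X = (X + d G R (p + 1) A) + V := by
    rw [add_comm V] at hTX
    rw [add_assoc X, hTX]; abel
  have hXA : X + d G R (p + 1) A ∈ cochains G ⊤ (p + 1 + 1) := add_mem hX (d_mem hAm)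
  have hd1 := d_cup hU p A
  have hd2 := d_cup hBm (p + 1) (X + d G R (p + 1) A)
  rw [map_add (d G R (p + 1 + 1)), d_d, add_zero, cup_eq_zero hI hBm.1 hdX, smul_zero,
    add_zero] at hd2
  rw [hdU] at hd1
  have hz' : cup (q + 1 + 1) (0 : (ℕ → G) → R) A = 0 := by ext; simp [cup]
  rw [hz', zero_add] at hd1
  have hsq : ((-1 : R) ^ (q + 1)) * (-1 : R) ^ (q + 1) = 1 := by
    rw [← mul_pow]; simp
  have hd1' : cup (q + 1) U (d G R (p + 1) A)
      = (-1 : R) ^ (q + 1) • d G R (q + 1 + p + 1) (cup (q + 1) U A) := by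
    rw [hd1, smul_smul, hsq, one_smul]
  have key : cup (q + 1) (reversal G R (q + 1 + 1) U) (reversal G R (p + 1 + 1) X)
      = cup (q + 1) U X + ((-1 : R) ^ (q + 1) • d G R (q + 1 + p + 1) (cup (q + 1) U A)
        + d G R (q + (p + 1) + 1) (cup q B (X + d G R (p + 1) A))) := by
    rw [hTX', cup_add, cup_eq_zero hI (reversal_mem hU).1 hVm, add_zero, hTU', add_cup, hd2,
      cup_add, hd1', add_assoc]
  rw [key, smul_add] at hTXU
  have h1 : d G R (q + 1 + p + 1) (cup (q + 1) U A) ∈ coboundaries G I (p + 1 + (q + 1)) := by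
    rw [show p + 1 + (q + 1) = q + 1 + p + 1 by ring]
    exact d_mem_coboundaries (cup_mem_left hU hAm)
  have h2 : d G R (q + (p + 1) + 1) (cup q B (X + d G R (p + 1) A))
      ∈ coboundaries G I (p + 1 + (q + 1)) := by
    rw [show p + 1 + (q + 1) = q + (p + 1) + 1 by ring]
    exact d_mem_coboundaries (cup_mem_left hBm hXA)
  have h3 := d_mem_coboundaries (homotopy_mem hXU)
  have h4 := Submodule.smul_mem _ ((-1 : R) ^ ((p + 1) * (q + 1)))
    (Submodule.add_mem _ (Submodule.smul_mem _ ((-1 : R) ^ (q + 1)) h1) h2)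
  convert Submodule.sub_mem _ h4 h3 using 1
  rw [hTXU]
  abel

lemma coboundary_cup (hI : I * I = ⊥) {B P : (ℕ → G) → R} (hB : B ∈ coboundaries G I (p + 1))
    (hP : P ∈ cochains G ⊤ (q + 1)) (hdP : ∀ w, d G R (q + 1) P w ∈ I) :
    cup (p + 1) B P ∈ coboundaries G I (p + q + 1) := by
  obtain ⟨C, hC, rfl⟩ := hB
  have h := d_cup hC q P
  rw [cup_eq_zero hI hC.1 hdP, smul_zero, add_zero] at h
  rw [← h]
  exact d_mem_coboundaries (cup_mem_left hC hP)

lemma cup_coboundary (hI : I * I = ⊥) {X B : (ℕ → G) → R} (hB : B ∈ coboundaries G I (q + 1))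
    (hX : X ∈ cochains G ⊤ (p + 1)) (hdX : ∀ w, d G R (p + 1) X w ∈ I) :
    cup p X B ∈ coboundaries G I (p + q + 1) := by
  obtain ⟨C, hC, rfl⟩ := hB
  have h := d_cup hX q C
  rw [cup_eq_zero hI hdX hC.1, zero_add] at h
  have h' : cup p X (d G R (q + 1) C) = (-1 : R) ^ p • d G R (p + q + 1) (cup p X C) := by
    rw [h, smul_smul, ← mul_pow]
    simp
  rw [h']
  exact Submodule.smul_mem _ _ (d_mem_coboundaries (cup_mem_right hX hC))

variable {j : ℕ} {X : (ℕ → G) → R}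

lemma power_mem (hX : X ∈ cochains G ⊤ (j + 1)) (k : ℕ) :
    power j X k ∈ cochains G ⊤ (k * j + 1) := by
  induction k with
  | zero => exact ⟨fun _ => trivial, fun _ _ _ => rfl, fun _ _ => rfl⟩
  | succ k ih =>
    rw [show (k + 1) * j + 1 = j + k * j + 1 by ring]
    exact cup_mem_left hX ih

lemma d_power_succ (hX : X ∈ cochains G ⊤ (j + 1)) (k : ℕ) :
    d G R ((k + 1) * j + 1) (power j X (k + 1)) = cup (j + 1) (d G R (j + 1) X) (power j X k)
      + (-1 : R) ^ j • cup j X (d G R (k * j + 1) (power j X k)) := by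
  rw [show (k + 1) * j + 1 = j + k * j + 1 by ring]
  exact d_cup hX _ _

lemma d_power_apply_mem (hX : X ∈ cochains G ⊤ (j + 1)) (hdX : ∀ w, d G R (j + 1) X w ∈ I)
    (k : ℕ) (w : ℕ → G) : d G R (k * j + 1) (power j X k) w ∈ I := by
  induction k generalizing w with
  | zero => simp [power, d_one]
  | succ k ih =>
    rw [d_power_succ hX]
    exact I.add_mem (I.mul_mem_right _ (hdX _)) (I.mul_mem_left _ (I.mul_mem_left _ (ih _)))

lemma d_mem_of_apply_mem (hX : X ∈ cochains G ⊤ m) (hdX : ∀ w, d G R m X w ∈ I) :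
    d G R m X ∈ cochains G I (m + 1) :=
  ⟨hdX, (d_mem hX).2⟩

lemma d_cup_power_mem (hX : X ∈ cochains G ⊤ (j + 1)) (hdX : ∀ w, d G R (j + 1) X w ∈ I)
    (l : ℕ) : cup (j + 1) (d G R (j + 1) X) (power j X l) ∈ cochains G I (j + 1 + l * j + 1) :=
  cup_mem_left (d_mem_of_apply_mem hX hdX) (power_mem hX l)

lemma d_d_cup_power (hI : I * I = ⊥) (hX : X ∈ cochains G ⊤ (j + 1))
    (hdX : ∀ w, d G R (j + 1) X w ∈ I) (l : ℕ) :
    d G R (j + 1 + l * j + 1) (cup (j + 1) (d G R (j + 1) X) (power j X l)) = 0 := by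
  rw [d_cup (d_mem hX), d_d, cup_eq_zero hI hdX (d_power_apply_mem hX hdX l), smul_zero, add_zero]
  ext w
  simp [cup]

lemma cup_d_cup_power (hI : I * I = ⊥) (hX : X ∈ cochains G ⊤ (j + 1 + 1))
    (hdX : ∀ w, d G R (j + 1 + 1) X w ∈ I) (l : ℕ) :
    cup (j + 1) X (cup (j + 1 + 1) (d G R (j + 1 + 1) X) (power (j + 1) X l))
        - cup (j + 1 + 1) (d G R (j + 1 + 1) X) (power (j + 1) X (l + 1))
      ∈ coboundaries G I ((l + 2) * (j + 1) + 1) := by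
  have h := cup_comm hI hX hdX (d_mem_of_apply_mem hX hdX) (d_d _ _)
  have hs : (-1 : R) ^ ((j + 1) * (j + 1 + 1)) = 1 := (Nat.even_mul_succ_self (j + 1)).neg_one_pow
  rw [hs, one_smul] at h
  rw [power, ← cup_assoc, ← cup_assoc, show j + 1 + 1 + (j + 1) = j + 1 + (j + 1 + 1) by ring,
    ← sub_cup, show (l + 2) * (j + 1) + 1 = j + 1 + (j + 1) + l * (j + 1) + 1 by ring]
  exact coboundary_cup hI h (power_mem hX l) (d_power_apply_mem hX hdX l)

lemma d_power_sub_mem (hI : I * I = ⊥) (hX : X ∈ cochains G ⊤ (j + 1 + 1))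
    (hdX : ∀ w, d G R (j + 1 + 1) X w ∈ I) (l : ℕ) :
    d G R ((l + 1) * (j + 1) + 1) (power (j + 1) X (l + 1))
        - (∑ i ∈ Finset.range (l + 1), ((-1 : R) ^ (j + 1)) ^ i) •
          cup (j + 1 + 1) (d G R (j + 1 + 1) X) (power (j + 1) X l)
      ∈ coboundaries G I ((l + 1) * (j + 1) + 1) := by
  induction l with
  | zero =>
    rw [d_power_succ hX]
    have hz : cup (j + 1) X (0 : (ℕ → G) → R) = 0 := by ext; simp [cup]
    simp [power, d_one, hz]
  | succ l ih =>
    have h1 := cup_coboundary hI ih hX hdX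
    rw [cup_sub, cup_smul, show j + 1 + (l + 1) * (j + 1) + 1 = (l + 2) * (j + 1) + 1 by ring] at h1
    have h2 := cup_d_cup_power hI hX hdX l
    rw [d_power_succ hX, Finset.sum_range_succ']
    simp only [pow_succ ((-1 : R) ^ (j + 1)), pow_zero, ← Finset.sum_mul]
    set c := ∑ i ∈ Finset.range (l + 1), ((-1 : R) ^ (j + 1)) ^ i
    convert add_mem (Submodule.smul_mem _ ((-1 : R) ^ (j + 1)) h1)
      (Submodule.smul_mem _ (c * (-1 : R) ^ (j + 1)) h2) using 1
    module

lemma two_smul_d_cup_power_mem (hI : I * I = ⊥) (hX : X ∈ cochains G ⊤ (j + 1 + 1))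
    (hdX : ∀ w, d G R (j + 1 + 1) X w ∈ I) (hj : Odd (j + 1)) {l : ℕ} (hl : Odd l) :
    (2 : R) • cup (j + 1 + 1) (d G R (j + 1 + 1) X) (power (j + 1) X (l + 1))
      ∈ coboundaries G I ((l + 2) * (j + 1) + 1) := by
  have h1 := cup_d_cup_power hI hX hdX l
  have h2 := cup_comm (q := j + 1 + l * (j + 1)) hI hX hdX
    (by convert d_cup_power_mem hX hdX l using 2; ring)
    (by convert d_d_cup_power hI hX hdX l using 3; ring)
  have hs : Odd ((j + 1) * (j + 1 + l * (j + 1) + 1)) :=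
    hj.mul ((hj.add_odd (hl.mul hj)).add_one)
  rw [hs.neg_one_pow, show j + 1 + l * (j + 1) + 1 = j + 1 + 1 + l * (j + 1) by ring,
    cup_assoc, show j + 1 + (j + 1 + 1 + l * (j + 1)) = (l + 2) * (j + 1) + 1 by ring] at h2
  have h3 : cup (l * (j + 1)) (power (j + 1) X l) X = power (j + 1) X (l + 1) := by
    clear * -
    induction l with
    | zero => ext w; simp [power, cup]
    | succ l ih =>
      rw [power, show (l + 1) * (j + 1) = j + 1 + l * (j + 1) by ring, cup_assoc, ih]
      rfl
  rw [h3] at h2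
  convert sub_mem h2 h1 using 1
  module

/-- If `N` annihilates the cohomology with coefficients in `I`, then the coboundary of the `N`-th
cup power of a cocycle modulo `I` is the coboundary of an `I`-valued cochain. -/
theorem d_power_mem_coboundaries (hI : I * I = ⊥) (hX : X ∈ cochains G ⊤ (j + 1 + 1))
    (hdX : ∀ w, d G R (j + 1 + 1) X w ∈ I) (N : ℕ) (hN : N ≠ 0)
    (hkill : ∀ i, ∀ Z ∈ cochains G I (i + 1 + 1), d G R (i + 1 + 1) Z = 0 →
      (N : R) • Z ∈ coboundaries G I (i + 1))
    (htwo : Odd N → N ≠ 1 → IsUnit (2 : R)) :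
    d G R (N * (j + 1) + 1) (power (j + 1) X N) ∈ coboundaries G I (N * (j + 1) + 1) := by
  obtain ⟨l, rfl⟩ := Nat.exists_eq_succ_of_ne_zero hN
  rw [← Submodule.sub_mem_iff_left _ (?_)]
  · exact d_power_sub_mem hI hX hdX l
  have hk : ((l + 1 : ℕ) : R) • cup (j + 1 + 1) (d G R (j + 1 + 1) X) (power (j + 1) X l)
      ∈ coboundaries G I ((l + 1) * (j + 1) + 1) := by
    have e : j + 1 + 1 + l * (j + 1) = (l + 1) * (j + 1) + 1 := by ring
    have h1 := d_cup_power_mem hX hdX l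
    have h2 := d_d_cup_power hI hX hdX l
    rw [e] at h1 h2
    exact hkill _ _ h1 h2
  rcases Nat.even_or_odd (j + 1) with hj | hj
  · rw [hj.neg_one_pow]
    simpa using hk
  · rw [hj.neg_one_pow, neg_one_geom_sum]
    split_ifs with hl
    · simp
    · rw [one_smul]
      by_cases hl0 : l = 0
      · subst hl0
        simpa using hk
      · obtain ⟨u, hu⟩ := htwo (Nat.not_even_iff_odd.1 hl) (by omega)
        obtain ⟨t, rfl⟩ := Nat.exists_eq_succ_of_ne_zero hl0
        have ht : Odd t := by
          by_contra h
          exact hl (by simpa [Nat.even_add_one] using h)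
        have h := Submodule.smul_mem _ (↑u⁻¹ : R) (two_smul_d_cup_power_mem hI hX hdX hj ht)
        rwa [smul_smul, ← hu, Units.inv_mul, one_smul] at h

/-! ### Comparison with inhomogeneous cochains -/

/-- The homogeneous cochain attached to an inhomogeneous cochain. -/
def homogenize {G M : Type*} [Group G] (n : ℕ) (f : (Fin n → G) → M) : (ℕ → G) → M :=
  fun w => f fun i => (w i)⁻¹ * w (i + 1)

/-- The sequence of partial products of a tuple. -/
def partialProducts {n : ℕ} (g : Fin n → G) : ℕ → G
  | 0 => 1
  | k + 1 => partialProducts g k * if h : k < n then g ⟨k, h⟩ else 1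

lemma homogenize_partialProducts {M : Type*} {n : ℕ} (f : (Fin n → G) → M) (g : Fin n → G) :
    homogenize n f (partialProducts g) = f g := by
  simp [homogenize, partialProducts]

lemma partialProducts_quotients {n : ℕ} (w : ℕ → G) (k : ℕ) (hk : k ≤ n) :
    partialProducts (fun i : Fin n => (w i)⁻¹ * w (i + 1)) k = (w 0)⁻¹ * w k := by
  induction k with
  | zero => simp [partialProducts]
  | succ k ih => simp [partialProducts, ih (by omega), show k < n by omega]

lemma homogenize_dehomogenize {n : ℕ} {C : (ℕ → G) → R} (hC : C ∈ cochains G I (n + 1)) :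
    homogenize n (fun g => C (partialProducts g)) = C := by
  ext w
  rw [← hC.2.2 (w 0)⁻¹ w]
  exact hC.2.1 _ _ fun i hi => partialProducts_quotients w i (by omega)

lemma homogenize_mem {n : ℕ} {f : (Fin n → G) → R} (hf : ∀ g, f g ∈ I) :
    homogenize n f ∈ cochains G I (n + 1) := by
  refine ⟨fun w => hf _, fun v w h => ?_, fun g w => ?_⟩
  · simp only [homogenize]
    congr 1
    ext i
    rw [h i (by omega), h (i + 1) (by omega)]
  · simp [homogenize, mul_assoc]

lemma d_homogenize (n : ℕ) (f : (Fin n → G) → R) :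
    d G R (n + 1) (homogenize n f) = homogenize (n + 1) (gdiff G R n f) := by
  ext w
  rw [d_apply, Finset.sum_range_succ', add_comm]
  simp only [homogenize, gdiff]
  rw [← Fin.sum_univ_eq_sum_range
    (fun k => (-1 : R) ^ (k + 1) * f fun i : Fin n =>
      (omitAt (k + 1) w i)⁻¹ * omitAt (k + 1) w (i + 1))]
  congr 1
  · simp [omitAt]
  · refine Finset.sum_congr rfl fun k _ => ?_
    rw [zsmul_eq_mul]
    push_cast
    congr 2
    ext t
    rcases lt_trichotomy (t : ℕ) k with h | h | h
    · rw [Fin.contractNth_apply_of_lt _ _ _ _ h]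
      simp [omitAt, h, show (t : ℕ) < k + 1 by omega]
    · rw [Fin.contractNth_apply_of_eq _ _ _ _ h]
      simp [omitAt, h, mul_assoc]
    · rw [Fin.contractNth_apply_of_gt _ _ _ _ h]
      simp [omitAt, show ¬ (t : ℕ) < k + 1 by omega, show ¬ (t : ℕ) < k by omega]

lemma map_gdiff {M N : Type*} [AddCommGroup M] [AddCommGroup N] (φ : M →+ N) (n : ℕ)
    (f : (Fin n → G) → M) (g : Fin (n + 1) → G) :
    φ (gdiff G M n f g) = gdiff G N n (fun h => φ (f h)) g := by
  simp [gdiff]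

lemma gdiff_eq_zero_iff (n : ℕ) (f : (Fin n → G) → R) :
    gdiff G R n f = 0 ↔ d G R (n + 1) (homogenize n f) = 0 := by
  rw [d_homogenize]
  refine ⟨fun h => by rw [h]; rfl, fun h => ?_⟩
  ext g
  rw [← homogenize_partialProducts (gdiff G R n f), h]
  rfl

lemma power_homogenize_partialProducts (j k : ℕ) (f : (Fin j → G) → R) (g : Fin (k * j) → G) :
    power j (homogenize j f) k (partialProducts g) = cupPow G R j k f g := by
  rw [power_apply, cupPow, ← Fin.prod_univ_eq_prod_range
    (fun i => homogenize j f fun t => partialProducts g (t + i * j))]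
  refine Finset.prod_congr rfl fun i _ => ?_
  simp only [homogenize]
  congr 1
  ext t
  have h : (t : ℕ) + i * j < k * j :=
    calc (t : ℕ) + i * j < (i + 1) * j := by rw [add_mul, one_mul, add_comm]; omega
      _ ≤ k * j := Nat.mul_le_mul_right j i.2
  rw [show (t : ℕ) + 1 + i * j = t + i * j + 1 by ring, partialProducts, inv_mul_cancel_left,
    dif_pos h]
  congr 2
  ring

end HomogeneousCochain

open HomogeneousCochain in
theorem cup_power_lifts_to_R
    (R : Type u) [CommRing R] [IsNoetherianRing R] [IsLocalRing R]
    (p : ℕ) (hp : p.Prime) [CharP (IsLocalRing.ResidueField R) p]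
    (hplocal : ∀ q : ℕ, q.Prime → q ≠ p → IsUnit (q : R))
    (G : Type*) [Group G] [Finite G] (n : ℕ)
    (hkill : ∀ (M : Type u) [AddCommGroup M] [Module R M],
      ∀ i : ℕ, 1 ≤ i → ∀ f : (Fin i → G) → M, gdiff G M i f = 0 →
        ∃ (m : ℕ) (hm : m + 1 = i) (c : (Fin m → G) → M),
          (p ^ n : ℕ) • f = fun g => gdiff G M m c (fun t => g (Fin.cast hm t)))
    (I : Ideal R) (hI : I * I = ⊥) :
    ∀ j : ℕ, 1 ≤ j → ∀ x : (Fin j → G) → R ⧸ I, gdiff G (R ⧸ I) j x = 0 →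
      ∃ y : (Fin (p ^ n * j) → G) → R,
        gdiff G R (p ^ n * j) y = 0 ∧
        ∃ (m : ℕ) (hm : m + 1 = p ^ n * j) (c : (Fin m → G) → R ⧸ I),
          ((fun g => Ideal.Quotient.mk I (y g)) - cupPow G (R ⧸ I) j (p ^ n) x)
            = fun g => gdiff G (R ⧸ I) m c (fun t => g (Fin.cast hm t)) := by
  intro j hj x hx
  obtain ⟨j, rfl⟩ := Nat.exists_eq_succ_of_ne_zero (by omega : j ≠ 0)
  have hN : p ^ n ≠ 0 := pow_ne_zero n hp.ne_zero
  set f : (Fin (j + 1) → G) → R := fun g => (x g).out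
  have hfx : (fun g => Ideal.Quotient.mk I (f g)) = x := funext fun g => Quotient.out_eq _
  have hX : homogenize (j + 1) f ∈ cochains G (⊤ : Ideal R) (j + 1 + 1) :=
    homogenize_mem fun _ => trivial
  have hdX : ∀ w, d G R (j + 1 + 1) (homogenize (j + 1) f) w ∈ I := by
    intro w
    rw [d_homogenize, ← Ideal.Quotient.eq_zero_iff_mem]
    refine (map_gdiff (Ideal.Quotient.mk I).toAddMonoidHom _ f _).trans ?_
    exact (congrFun (congrArg (gdiff G (R ⧸ I) (j + 1)) hfx) _).trans (congrFun hx _)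
  have hkillI : ∀ i, ∀ Z ∈ cochains G I (i + 1 + 1), d G R (i + 1 + 1) Z = 0 →
      ((p ^ n : ℕ) : R) • Z ∈ coboundaries G I (i + 1) := by
    intro i Z hZ hdZ
    have hzero : gdiff G I (i + 1) (fun g => ⟨Z (partialProducts g), hZ.1 _⟩) = 0 := by
      ext g
      refine (map_gdiff I.subtype.toAddMonoidHom _
        (fun g => (⟨Z (partialProducts g), hZ.1 _⟩ : I)) g).trans ?_
      refine congrFun ((gdiff_eq_zero_iff (i + 1) fun g => Z (partialProducts g)).2 ?_) g
      rwa [homogenize_dehomogenize hZ]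
    obtain ⟨m, hm, c, hc⟩ := hkill I (i + 1) (by omega) _ hzero
    obtain rfl : m = i := by omega
    refine ⟨homogenize m fun g => (c g : R), homogenize_mem fun g => (c g).2, ?_⟩
    rw [d_homogenize, ← homogenize_dehomogenize hZ]
    ext w
    have h := congrArg (Subtype.val) (congrFun hc fun i => (w i)⁻¹ * w (i + 1))
    refine ((map_gdiff I.subtype.toAddMonoidHom _ c _).symm.trans h.symm).trans ?_
    simp [homogenize]
  have htwo : Odd (p ^ n) → p ^ n ≠ 1 → IsUnit (2 : R) := by
    intro hodd hne
    refine mod_cast hplocal 2 Nat.prime_two ?_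
    rintro rfl
    have hn : n ≠ 0 := by rintro rfl; simp at hne
    exact (Nat.not_even_iff_odd.2 hodd) ((Nat.even_pow' hn).2 even_two)
  obtain ⟨C, hC, hdC⟩ := d_power_mem_coboundaries hI hX hdX (p ^ n) hN hkillI htwo
  have hY : power (j + 1) (homogenize (j + 1) f) (p ^ n) - C
      ∈ cochains G (⊤ : Ideal R) (p ^ n * (j + 1) + 1) :=
    sub_mem (power_mem hX _) (cochains_mono le_top hC)
  refine ⟨fun g => (power (j + 1) (homogenize (j + 1) f) (p ^ n) - C) (partialProducts g), ?_,
    p ^ n * (j + 1) - 1, Nat.sub_add_cancel (Nat.mul_pos (Nat.pos_of_ne_zero hN) j.succ_pos), 0, ?_⟩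
  · rw [gdiff_eq_zero_iff, homogenize_dehomogenize hY, map_sub, hdC, sub_self]
  · ext g
    have hCg : Ideal.Quotient.mk I (C (partialProducts g)) = 0 :=
      Ideal.Quotient.eq_zero_iff_mem.2 (hC.1 _)
    simp only [Pi.sub_apply, map_sub, hCg, power_homogenize_partialProducts, map_cupPow, hfx]
    simp [gdiff]
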